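/- arXiv:2603.21790 — 2 statements merged into one kernel-verified Lean document; each statement's English description precedes it below -/
import Mathlib

section
/- There exists a positive integer k (an absolute constant) such that the following holds. Let P, Q, R ⊆ ℝ³ be finite sets such that for every two distinct points x, y of P ∪ Q ∪ R and every coordinate i ∈ {1,2,3}, xᵢ − yᵢ ∉ {−1, 0, 1}. For each r ∈ R define N²[r] = {p ∈ P : ∃ q ∈ Q with □(q) ∩ □(p) ≠ ∅ and □(q) ∩ □(r) ≠ ∅}. Then the number of distinct sets in {N²[r] : r ∈ R} is at most (|P| + 1)^k. In particular, the VC-dimension of the set system (P, {N²[r] : r ∈ R}) is bounded by an absolute constant independent of P, Q, R. -/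
/-- The closed axis-parallel cube of side length 1 centered at `p ∈ ℝ³`. -/
def cube (p : Fin 3 → ℝ) : Set (Fin 3 → ℝ) :=
  {x | ∀ i, |x i - p i| ≤ 1 / 2}

/-- `N²[r] = {p ∈ P : ∃ q ∈ Q with □(q) ∩ □(p) ≠ ∅ and □(q) ∩ □(r) ≠ ∅}`. -/
def N2cube (P Q : Set (Fin 3 → ℝ)) (r : Fin 3 → ℝ) : Set (Fin 3 → ℝ) :=
  {p ∈ P | ∃ q ∈ Q, (cube q ∩ cube p).Nonempty ∧ (cube q ∩ cube r).Nonempty}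

/-- `A` is shattered by a family `F` of sets. -/
def Shatters {α : Type*} (F : Set (Set α)) (A : Set α) : Prop :=
  ∀ B ⊆ A, ∃ S ∈ F, S ∩ A = B

/-!
Fix for each coordinate the side on which `p` lies of `r`, that is, a sign vector `ε` with
`ε • r ≤ ε • p`. Then the cube at `q` meets those at `p` and `r` iff
`ε • p - 1 ≤ ε • q ≤ ε • r + 1`. So `N²[r]` is a union, over the eight sign vectors, of
intersections of sets `{p ∈ P | ∃ q ∈ Q, f p ≤ q ≤ z}`, for the product order.

Such a set is encoded by boundedly many numbers at most `|P|`. First record how many points of `P`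
have `i`-th coordinate at most `z i`, for each `i`; these cuts are nested, so their sizes determine
them. Among the `z` with given cuts, let `I` be the set of coordinates in which `q` and `z` induce
the same cut. As `I` or its complement has at most one element in dimension at most three, the
points dominated through `q` with a given `I` again form nested sets: if `I` has at most one
element, only one coordinate of `z` matters, and otherwise only one coordinate of `q` does.
So the sizes of these sets complete the code.
-/

open Function

section Counting

theorem encard_range_le_pow_of_factorsThrough {X S T κ : Type*} [Fintype κ] {F : X → S}
    {G : κ → X → T} {b : ℕ∞} (hG : ∀ k, (Set.range (G k)).encard ≤ b)
    (hF : F.FactorsThrough fun x k => G k x) :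
    (Set.range F).encard ≤ b ^ Fintype.card κ := by
  rcases isEmpty_or_nonempty X with hX | ⟨⟨x₀⟩⟩
  · simp only [Set.range_eq_empty, Set.encard_empty, zero_le]
  have hcomp : extend (fun x k => G k x) F (fun _ => F x₀) ∘ (fun x k => G k x) = F :=
    hF.extend_comp _
  calc (Set.range F).encard
      ≤ (Set.range fun x k => G k x).encard := by
        rw [← hcomp, Set.range_comp]
        exact Set.encard_image_le _ _
    _ ≤ (Set.univ.pi fun k => Set.range (G k)).encard :=
        Set.encard_le_encard (Set.range_subset_iff.2 fun x k _ => Set.mem_range_self x)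
    _ = ∏ k, (Set.range (G k)).encard := Set.encard_pi_eq_prod_encard
    _ ≤ b ^ Fintype.card κ := Finset.prod_le_pow_card _ _ _ fun k _ => hG k

theorem encard_range_ncard_le {X α : Type*} {P : Set α} (hP : P.Finite) {S : X → Set α}
    (hS : ∀ x, S x ⊆ P) : (Set.range fun x => (S x).ncard).encard ≤ (P.ncard + 1 : ℕ) :=
  calc (Set.range fun x => (S x).ncard).encard
      ≤ (Finset.range (P.ncard + 1) : Set ℕ).encard :=
        Set.encard_le_encard <| Set.range_subset_iff.2 fun x =>
          Finset.mem_coe.2 <| Finset.mem_range_succ_iff.2 <| Set.ncard_le_ncard (hS x) hP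
    _ = (P.ncard + 1 : ℕ) := by rw [Set.encard_coe_eq_coe_finsetCard, Finset.card_range]

theorem eq_of_ncard_eq_of_subset_or_subset {α : Type*} {P S T : Set α} (hP : P.Finite)
    (hS : S ⊆ P) (hT : T ⊆ P) (hST : S ⊆ T ∨ T ⊆ S) (hcard : S.ncard = T.ncard) : S = T := by
  rcases hST with h | h
  · exact Set.eq_of_subset_of_ncard_le h hcard.ge (hP.subset hT)
  · exact (Set.eq_of_subset_of_ncard_le h hcard.le (hP.subset hS)).symm

end Counting

section VCDimension

theorem exists_succ_pow_lt_two_pow (k : ℕ) : ∃ c : ℕ, (c + 1) ^ k < 2 ^ c := by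
  have hlim := tendsto_pow_const_div_const_pow_of_one_lt k (one_lt_two (α := ℝ))
  obtain ⟨c, hc⟩ := Filter.eventually_atTop.1 (hlim.eventually_lt_const (one_half_pos (α := ℝ)))
  have hlt := hc (c + 1) c.le_succ
  rw [div_lt_iff₀ (by positivity), pow_succ (2 : ℝ)] at hlt
  refine ⟨c, ?_⟩
  have : ((c + 1 : ℕ) : ℝ) ^ k < 2 ^ c := by linarith
  exact_mod_cast this

theorem Shatters.mono {α : Type*} {F : Set (Set α)} {A B : Set α} (hA : Shatters F A)
    (hBA : B ⊆ A) : Shatters F B := by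
  intro C hC
  obtain ⟨S, hS, hSC⟩ := hA C (hC.trans hBA)
  refine ⟨S, hS, ?_⟩
  rw [← Set.inter_eq_self_of_subset_right hBA, ← Set.inter_assoc, hSC,
    Set.inter_eq_self_of_subset_left hC]

theorem Shatters.two_pow_ncard_le {α : Type*} {F : Set (Set α)} {A : Set α} (hA : Shatters F A)
    (hfin : A.Finite) : (2 ^ A.ncard : ℕ) ≤ ((· ∩ A) '' F).encard := by
  rw [← Set.ncard_powerset A hfin, hfin.powerset.cast_ncard_eq]
  exact Set.encard_le_encard hA

theorem exists_forall_shatters_encard_le (k : ℕ) : ∃ c : ℕ, ∀ {α : Type*} (F : Set (Set α)),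
    (∀ A : Set α, A.Finite → ((· ∩ A) '' F).encard ≤ ((A.ncard + 1) ^ k : ℕ)) →
      ∀ A, Shatters F A → A.encard ≤ c := by
  obtain ⟨c, hc⟩ := exists_succ_pow_lt_two_pow k
  refine ⟨c, fun F hF A hA => ?_⟩
  by_contra! hcA
  obtain ⟨B, hBA, hB⟩ := Set.exists_subset_encard_eq hcA.le
  have hBfin : B.Finite := Set.finite_of_encard_eq_coe hB
  have hle := ((hA.mono hBA).two_pow_ncard_le hBfin).trans (hF B hBfin)
  rw [Set.ncard, hB, ENat.toNat_natCast] at hle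
  exact hc.not_ge (ENat.natCast_le_natCast.1 hle)

end VCDimension

section Domination

variable {α ι L : Type*} [LinearOrder L]

/-- The points of `P` which, once placed in `ι → L` by `f`, are dominated by a point of `Q` that is
itself dominated by `z`. -/
def dominated (P : Set α) (f : α → ι → L) (Q : Set (ι → L)) (z : ι → L) : Set α :=
  {p ∈ P | ∃ q ∈ Q, f p ≤ q ∧ q ≤ z}

/-- The cut that the threshold `t` induces on `P` in the coordinate `i`. It replaces the rank of
`t` among the `i`-th coordinates of the points of `P`. -/
def cut (P : Set α) (f : α → ι → L) (i : ι) (t : L) : Set α :=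
  {p ∈ P | f p i ≤ t}

/-- The part of `dominated P f Q z` witnessed by the points `q` that induce the same cut as `z`
exactly in the coordinates of `I`. -/
def dominatedLayer (P : Set α) (f : α → ι → L) (Q : Set (ι → L)) (I : Set ι) (z : ι → L) : Set α :=
  {p ∈ P | ∃ q ∈ Q, f p ≤ q ∧ q ≤ z ∧ {i | cut P f i (q i) = cut P f i (z i)} = I}

variable {P : Set α} {f : α → ι → L} {Q : Set (ι → L)} {I : Set ι} {z w : ι → L}

theorem cut_subset {i : ι} {t : L} : cut P f i t ⊆ P :=
  Set.sep_subset _ _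

theorem dominatedLayer_subset : dominatedLayer P f Q I z ⊆ P :=
  Set.sep_subset _ _

theorem cut_mono (i : ι) : Monotone (cut P f i) :=
  fun _ _ hst _ hp => ⟨hp.1, hp.2.trans hst⟩

theorem dominated_eq_iUnion_dominatedLayer :
    dominated P f Q z = ⋃ I, dominatedLayer P f Q I z := by
  ext p
  simp only [dominated, dominatedLayer, Set.mem_iUnion, Set.mem_sep_iff]
  constructor
  · rintro ⟨hp, q, hq, hpq, hqz⟩
    exact ⟨_, hp, q, hq, hpq, hqz, rfl⟩
  · rintro ⟨_, hp, q, hq, hpq, hqz, -⟩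
    exact ⟨hp, q, hq, hpq, hqz⟩

theorem le_of_cut_eq_of_le_on_compl {p : α} (hp : p ∈ P) (hpz : f p ≤ z)
    (hcut : ∀ i ∈ I, cut P f i (z i) = cut P f i (w i)) (hle : ∀ i ∈ Iᶜ, z i ≤ w i) :
    f p ≤ w := by
  intro i
  by_cases hi : i ∈ I
  · exact ((hcut i hi).subset ⟨hp, hpz i⟩).2
  · exact (hpz i).trans (hle i hi)

theorem dominatedLayer_subset_of_le_on (hcut : ∀ i, cut P f i (z i) = cut P f i (w i))
    (hle : ∀ i ∈ I, z i ≤ w i) : dominatedLayer P f Q I z ⊆ dominatedLayer P f Q I w := by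
  rintro p ⟨hp, q, hq, hpq, hqz, hI⟩
  refine ⟨hp, q, hq, hpq, fun i => ?_, by simpa only [← hcut] using hI⟩
  by_cases hi : i ∈ I
  · exact (hqz i).trans (hle i hi)
  · by_contra! hwq
    -- The cut of `q i` is squeezed between the equal cuts of `w i` and `z i`.
    have hqcut : cut P f i (q i) = cut P f i (z i) :=
      (cut_mono i (hqz i)).antisymm ((hcut i).subset.trans (cut_mono i hwq.le))
    exact hi (hI.subset hqcut)

theorem forall_le_or_forall_ge_of_subsingleton (hI : I.Subsingleton) (z w : ι → L) :
    (∀ i ∈ I, z i ≤ w i) ∨ ∀ i ∈ I, w i ≤ z i := by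
  rcases hI.eq_empty_or_singleton with rfl | ⟨i, rfl⟩
  · simp
  · simpa using le_total (z i) (w i)

theorem dominatedLayer_total_of_subsingleton (hI : I.Subsingleton)
    (hcut : ∀ i, cut P f i (z i) = cut P f i (w i)) :
    dominatedLayer P f Q I z ⊆ dominatedLayer P f Q I w ∨
      dominatedLayer P f Q I w ⊆ dominatedLayer P f Q I z :=
  (forall_le_or_forall_ge_of_subsingleton hI z w).imp (dominatedLayer_subset_of_le_on hcut)
    (dominatedLayer_subset_of_le_on fun i => (hcut i).symm)

theorem dominatedLayer_total_of_subsingleton_compl (hI : Iᶜ.Subsingleton)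
    (hcut : ∀ i, cut P f i (z i) = cut P f i (w i)) :
    dominatedLayer P f Q I z ⊆ dominatedLayer P f Q I w ∨
      dominatedLayer P f Q I w ⊆ dominatedLayer P f Q I z := by
  by_contra! hnot
  obtain ⟨⟨p, ⟨hp, q, hq, hpq, hqz, hqI⟩, hpw⟩, ⟨p', ⟨hp', q', hq', hpq', hqw, hqI'⟩, hpz⟩⟩ :=
    hnot.imp Set.not_subset.1 Set.not_subset.1
  have hqq' : ∀ i ∈ I, cut P f i (q i) = cut P f i (q' i) := fun i hi =>
    ((hqI.symm.subset hi).trans (hcut i)).trans (hqI'.symm.subset hi).symm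
  rcases forall_le_or_forall_ge_of_subsingleton hI q q' with hle | hle
  · exact hpw ⟨hp, q', hq', le_of_cut_eq_of_le_on_compl hp hpq hqq' hle, hqw, hqI'⟩
  · exact hpz ⟨hp', q, hq,
      le_of_cut_eq_of_le_on_compl hp' hpq' (fun i hi => (hqq' i hi).symm) hle, hqz, hqI⟩

variable [Fintype ι]

theorem subsingleton_or_subsingleton_compl (hι : Fintype.card ι ≤ 3) (I : Set ι) :
    I.Subsingleton ∨ Iᶜ.Subsingleton := by
  have hcard := Set.ncard_add_ncard_compl I
  rw [Nat.card_eq_fintype_card] at hcard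
  rw [← Set.ncard_le_one_iff_subsingleton, ← Set.ncard_le_one_iff_subsingleton]
  lia

theorem dominated_eq_of_ncard_eq (hι : Fintype.card ι ≤ 3) (hP : P.Finite)
    (hcut : ∀ i, (cut P f i (z i)).ncard = (cut P f i (w i)).ncard)
    (hlayer : ∀ I, (dominatedLayer P f Q I z).ncard = (dominatedLayer P f Q I w).ncard) :
    dominated P f Q z = dominated P f Q w := by
  have hcut_eq : ∀ i, cut P f i (z i) = cut P f i (w i) := fun i =>
    eq_of_ncard_eq_of_subset_or_subset hP cut_subset cut_subset
      ((le_total (z i) (w i)).imp (cut_mono i ·) (cut_mono i ·)) (hcut i)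
  simp only [dominated_eq_iUnion_dominatedLayer]
  refine Set.iUnion_congr fun I => eq_of_ncard_eq_of_subset_or_subset hP dominatedLayer_subset
    dominatedLayer_subset ?_ (hlayer I)
  rcases subsingleton_or_subsingleton_compl hι I with hI | hI
  · exact dominatedLayer_total_of_subsingleton hI hcut_eq
  · exact dominatedLayer_total_of_subsingleton_compl hI hcut_eq

theorem encard_range_dominated_le (hι : Fintype.card ι ≤ 3) (hP : P.Finite) (f : α → ι → L)
    (Q : Set (ι → L)) : (Set.range (dominated P f Q)).encard ≤
      ((P.ncard + 1) ^ (Fintype.card ι + 2 ^ Fintype.card ι) : ℕ) := by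
  let code : ι ⊕ Set ι → (ι → L) → ℕ
    | .inl i, z => (cut P f i (z i)).ncard
    | .inr I, z => (dominatedLayer P f Q I z).ncard
  have hrange : ∀ k, (Set.range (code k)).encard ≤ (P.ncard + 1 : ℕ) := by
    rintro (i | I)
    · exact encard_range_ncard_le hP fun _ => cut_subset
    · exact encard_range_ncard_le hP fun _ => dominatedLayer_subset
  have hcode : (dominated P f Q).FactorsThrough fun z k => code k z := fun z w h =>
    dominated_eq_of_ncard_eq hι hP (fun i => congrFun h (.inl i)) fun I => congrFun h (.inr I)
  have hcount := encard_range_le_pow_of_factorsThrough hrange hcode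
  rw [Fintype.card_sum, Fintype.card_set] at hcount
  exact_mod_cast hcount

end Domination

section Cubes

theorem cube_inter_cube_nonempty_iff {p q : Fin 3 → ℝ} :
    (cube q ∩ cube p).Nonempty ↔ ∀ i, |q i - p i| ≤ 1 := by
  constructor
  · rintro ⟨x, hq, hp⟩ i
    calc |q i - p i| ≤ |q i - x i| + |x i - p i| := abs_sub_le _ _ _
      _ ≤ 1 / 2 + 1 / 2 := add_le_add (abs_sub_comm (q i) (x i) ▸ hq i) (hp i)
      _ = 1 := add_halves 1
  · intro h
    refine ⟨fun i => (q i + p i) / 2, fun i => ?_, fun i => ?_⟩ <;>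
    · have := abs_le.1 (h i)
      exact abs_le.2 ⟨by linarith, by linarith⟩

theorem abs_sub_le_one_and_iff_exists_sign {p q r : ℝ} :
    |q - p| ≤ 1 ∧ |q - r| ≤ 1 ↔
      ∃ ε : ℤˣ, ε • r ≤ ε • p ∧ ε • p - 1 ≤ ε • q ∧ ε • q ≤ ε • r + 1 := by
  simp only [abs_le]
  constructor
  · rintro ⟨⟨_, _⟩, _, _⟩
    rcases le_total r p with h | h
    · refine ⟨1, ?_, ?_, ?_⟩ <;> simp only [one_smul] <;> linarith
    · refine ⟨-1, ?_, ?_, ?_⟩ <;> simp only [Units.neg_smul, one_smul] <;> linarith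
  · rintro ⟨ε, h⟩
    rcases Int.units_eq_one_or ε with rfl | rfl <;>
    · simp only [Units.neg_smul, one_smul] at h
      refine ⟨⟨?_, ?_⟩, ?_, ?_⟩ <;> linarith

theorem mem_N2cube_iff_exists_sign {P Q : Set (Fin 3 → ℝ)} {p r : Fin 3 → ℝ} :
    p ∈ N2cube P Q r ↔ p ∈ P ∧ ∃ ε : Fin 3 → ℤˣ, ε • r ≤ ε • p ∧
      ∃ q ∈ Q, ε • p - 1 ≤ ε • q ∧ ε • q ≤ ε • r + 1 := by
  have hsign : ∀ q : Fin 3 → ℝ, (cube q ∩ cube p).Nonempty ∧ (cube q ∩ cube r).Nonempty ↔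
      ∃ ε : Fin 3 → ℤˣ, ε • r ≤ ε • p ∧ ε • p - 1 ≤ ε • q ∧ ε • q ≤ ε • r + 1 := fun q => by
    simp only [cube_inter_cube_nonempty_iff, ← forall_and, abs_sub_le_one_and_iff_exists_sign,
      Classical.skolem, Pi.le_def, Pi.sub_apply, Pi.add_apply, Pi.smul_apply', Pi.one_apply]
  simp only [N2cube, Set.mem_sep_iff, hsign]
  grind

theorem N2cube_eq_iUnion_dominated (P Q : Set (Fin 3 → ℝ)) (r : Fin 3 → ℝ) :
    N2cube P Q r = ⋃ ε : Fin 3 → ℤˣ,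
      dominated P (fun p => -(ε • p)) Set.univ (-(ε • r)) ∩
        dominated P (fun p => ε • p - 1) ((ε • ·) '' Q) (ε • r + 1) := by
  ext p
  have horthant : ∀ ε : Fin 3 → ℤˣ,
      (∃ x : Fin 3 → ℝ, -(ε • p) ≤ x ∧ x ≤ -(ε • r)) ↔ ε • r ≤ ε • p := fun ε =>
    ⟨fun ⟨_, hpx, hxr⟩ => neg_le_neg_iff.1 (hpx.trans hxr), fun h => ⟨_, neg_le_neg h, le_rfl⟩⟩
  simp only [mem_N2cube_iff_exists_sign, dominated, Set.mem_iUnion, Set.mem_inter_iff,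
    Set.mem_sep_iff, Set.mem_univ, true_and, horthant, Set.exists_mem_image]
  grind

theorem N2cube_inter (P Q A : Set (Fin 3 → ℝ)) (r : Fin 3 → ℝ) :
    N2cube (P ∩ A) Q r = N2cube P Q r ∩ A :=
  Set.ext fun _ => and_right_comm

theorem encard_range_N2cube_le {P : Set (Fin 3 → ℝ)} (hP : P.Finite) (Q : Set (Fin 3 → ℝ)) :
    (Set.range (N2cube P Q)).encard ≤ ((P.ncard + 1) ^ 176 : ℕ) := by
  -- `176 = (2 * 2 ^ 3) * (3 + 2 ^ 3)`: two dominated sets for each of the eight sign vectors.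
  let part : (Fin 3 → ℤˣ) × Bool → (Fin 3 → ℝ) → Set (Fin 3 → ℝ)
    | (ε, true), r => dominated P (fun p => -(ε • p)) Set.univ (-(ε • r))
    | (ε, false), r => dominated P (fun p => ε • p - 1) ((ε • ·) '' Q) (ε • r + 1)
  have hdom : ∀ (f : (Fin 3 → ℝ) → Fin 3 → ℝ) Q' (z : (Fin 3 → ℝ) → Fin 3 → ℝ),
      (Set.range fun r => dominated P f Q' (z r)).encard ≤ ((P.ncard + 1) ^ 11 : ℕ) :=
    fun f Q' z => (Set.encard_le_encard (Set.range_comp_subset_range z _)).trans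
      (encard_range_dominated_le (Fintype.card_fin 3).le hP f Q')
  have hpart : ∀ k, (Set.range (part k)).encard ≤ ((P.ncard + 1) ^ 11 : ℕ) := by
    rintro ⟨ε, _ | _⟩ <;> exact hdom _ _ _
  have hfactors : (N2cube P Q).FactorsThrough fun r k => part k r := by
    intro r r' h
    simp only [N2cube_eq_iUnion_dominated]
    exact Set.iUnion_congr fun ε =>
      congrArg₂ (· ∩ ·) (congrFun h (ε, true)) (congrFun h (ε, false))
  calc (Set.range (N2cube P Q)).encard
      ≤ (((P.ncard + 1) ^ 11 : ℕ) : ℕ∞) ^ Fintype.card ((Fin 3 → ℤˣ) × Bool) :=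
        encard_range_le_pow_of_factorsThrough hpart hfactors
    _ = ((P.ncard + 1) ^ 176 : ℕ) := by
        rw [← Nat.cast_pow, ← pow_mul]; rfl

end Cubes

theorem stmt12_general :
    ∃ k c : ℕ, 0 < k ∧ ∀ P Q R : Set (Fin 3 → ℝ),
      (P.Finite → ((fun r => N2cube P Q r) '' R).ncard ≤ (P.ncard + 1) ^ k) ∧
      ∀ A, Shatters ((fun r => N2cube P Q r) '' R) A → A.encard ≤ c := by
  obtain ⟨c, hc⟩ := exists_forall_shatters_encard_le 176
  refine ⟨176, c, by norm_num, fun P Q R => ⟨fun hP => ?_, hc _ fun A hA => ?_⟩⟩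
  · have hcount := (Set.encard_le_encard (Set.image_subset_range _ R)).trans
      (encard_range_N2cube_le hP Q)
    exact (Set.encard_le_coe_iff_finite_ncard_le.1 hcount).2
  · have htrace : (· ∩ A) '' ((fun r => N2cube P Q r) '' R) ⊆ Set.range (N2cube (P ∩ A) Q) := by
      rintro _ ⟨_, ⟨r, -, rfl⟩, rfl⟩
      exact ⟨r, N2cube_inter P Q A r⟩
    refine ((Set.encard_le_encard htrace).trans
      (encard_range_N2cube_le (hA.subset Set.inter_subset_right) Q)).trans ?_
    have : (P ∩ A).ncard ≤ A.ncard := Set.ncard_le_ncard Set.inter_subset_right hA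
    gcongr

theorem stmt12 :
    ∃ k c : ℕ, 0 < k ∧
      ∀ P Q R : Set (Fin 3 → ℝ), P.Finite → Q.Finite → R.Finite →
        (∀ x ∈ P ∪ Q ∪ R, ∀ y ∈ P ∪ Q ∪ R, x ≠ y →
          ∀ i, x i - y i ∉ ({-1, 0, 1} : Set ℝ)) →
        ((fun r => N2cube P Q r) '' R).ncard ≤ (P.ncard + 1) ^ k ∧
        ∀ A ⊆ P, Shatters ((fun r => N2cube P Q r) '' R) A → A.ncard ≤ c := by
  obtain ⟨k, c, hk, h⟩ := stmt12_general
  exact ⟨k, c, hk, fun P Q R hP _ _ _ => ⟨(h P Q R).1 hP, fun A _ hA =>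
    (Set.encard_le_coe_iff_finite_ncard_le.1 ((h P Q R).2 A hA)).2⟩⟩
end

section
/- Let P, Q, R, S ⊆ ℝ³ be finite sets such that all points of P ∪ Q ∪ R ∪ S have pairwise distinct coordinate values in each of the three axes, and let ◁₁, ◁₂, ◁₃ be generalized dominance relations. If P and S are x-separated, y-separated, and z-separated, then the number of distinct sets in the family {N³[s] : s ∈ S} is at most (|P| + 1)²¹. -/
/-- The three possible coordinate relations: `<`, `>`, or the always-true relation. -/
inductive CoordRel
  | lt
  | gt
  | top

/-- Interpretation of a coordinate relation on real numbers. -/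
def CoordRel.holds : CoordRel → ℝ → ℝ → Prop
  | .lt, a, b => a < b
  | .gt, a, b => b < a
  | .top, _, _ => True

/-- A generalized dominance relation on `ℝ³`: `p ◁ q` iff in each of the three
coordinates a fixed relation (`<`, `>`, or always-true) holds. -/
def IsGenDom (rel : (Fin 3 → ℝ) → (Fin 3 → ℝ) → Prop) : Prop :=
  ∃ R : Fin 3 → CoordRel, ∀ p q, rel p q ↔ ∀ i, (R i).holds (p i) (q i)

/-- `A` and `B` are separated in coordinate `i`: some threshold `μ` has all of `A`
strictly below and all of `B` strictly above in coordinate `i`, or vice versa. -/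
def SepAt (i : Fin 3) (A B : Set (Fin 3 → ℝ)) : Prop :=
  ∃ μ : ℝ, ((∀ a ∈ A, a i < μ) ∧ ∀ b ∈ B, μ < b i) ∨
    ((∀ b ∈ B, b i < μ) ∧ ∀ a ∈ A, μ < a i)

/-- `N³[s] = {p ∈ P : ∃ q ∈ Q, r ∈ R with p ◁₁ q, q ◁₂ r and r ◁₃ s}`. -/
def N3 (P Q R : Set (Fin 3 → ℝ)) (d₁ d₂ d₃ : (Fin 3 → ℝ) → (Fin 3 → ℝ) → Prop)
    (s : Fin 3 → ℝ) : Set (Fin 3 → ℝ) :=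
  {p ∈ P | ∃ q ∈ Q, ∃ r ∈ R, d₁ p q ∧ d₂ q r ∧ d₃ r s}

/-!
On each axis the points of `P` and `S` lie on opposite sides of a threshold, so along a path
`p ◁₁ q ◁₂ r ◁₃ s` every coordinate changes sides at one of the three steps, and at that step the
relation imposed on it is automatic: whether it holds depends on the sides only.

If two coordinates change sides at the same step, that step is governed by the one remaining
coordinate and is a Ferrers relation. The sets `N³[s]` obtained from such paths form a chain, hence
there are at most `|P| + 1` of them. There are `3 * 3` choices of the step and of the remaining
coordinate.

Otherwise the coordinates change sides at distinct steps, in one of `3!` orders, and each step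
compares the two other coordinates. Such paths yield a family without a shattered triple, hence of
size at most `(|P| + 1) ^ 2` by Sauer–Shelah. Indeed, two crossing paths `p, q, r, s` and
`p', q', r', s'` (with `p ∉ N³[s']` and `p' ∉ N³[s]`) cross at each step. A coordinate compared at
two consecutive steps carries the direction in which they cross from one step to the next, so it
arrives at the last step independently of the paths chosen. A shattered triple yields two such
crossings with the roles of `s` and `s'` interchanged, so the remaining coordinate of the last step,
compared by a Ferrers relation, would have to separate them in both directions.

Every `N³[s]` is the union of its parts from these patterns, so the number of sets is at most the
product of the bounds, `(|P| + 1) ^ (9 + 2 * 6)`.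
-/

section SetFamilies

variable {α β : Type*}

lemma sum_range_choose_le_pow (n d : ℕ) :
    ∑ k ∈ Finset.range (d + 1), n.choose k ≤ (n + 1) ^ d := by
  rw [add_pow]
  refine Finset.sum_le_sum fun k hk => ?_
  have hkd : 0 < d.choose k := Nat.choose_pos (Finset.mem_range_succ_iff.mp hk)
  calc n.choose k ≤ n ^ k := Nat.choose_le_pow n k
    _ ≤ n ^ k * d.choose k := Nat.le_mul_of_pos_right _ hkd
    _ = n ^ k * 1 ^ (d - k) * d.choose k := by rw [one_pow, mul_one]

lemma shatters_coe_iff [DecidableEq α] {𝒜 : Finset (Finset α)} {A : Finset α} :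
    Shatters ((fun t : Finset α => (t : Set α)) '' 𝒜) (A : Set α) ↔ 𝒜.Shatters A := by
  constructor
  · intro h B hB
    obtain ⟨_, ⟨t, ht, rfl⟩, htA⟩ := h B (by exact_mod_cast hB)
    exact ⟨t, ht, Finset.coe_injective (by simpa [Set.inter_comm] using htA)⟩
  · intro h B hB
    lift B to Finset α using A.finite_toSet.subset hB
    obtain ⟨t, ht, htA⟩ := h (by exact_mod_cast hB)
    exact ⟨t, ⟨t, ht, rfl⟩, by simpa [Set.inter_comm] using congrArg (↑· : Finset α → Set α) htA⟩

lemma ncard_le_pow_of_not_shatters {P : Set α} (hP : P.Finite) {𝓕 : Set (Set α)}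
    (h𝓕 : ∀ T ∈ 𝓕, T ⊆ P) (d : ℕ) (h : ∀ A : Finset α, A.card = d + 1 → ¬ Shatters 𝓕 A) :
    𝓕.ncard ≤ (P.ncard + 1) ^ d := by
  classical
  lift P to Finset α using hP
  obtain ⟨𝒜, rfl⟩ : ∃ 𝒜 : Finset (Finset α), 𝓕 = (fun t : Finset α => (t : Set α)) '' 𝒜 := by
    refine ⟨P.powerset.filter fun t : Finset α => (t : Set α) ∈ 𝓕, Set.ext fun T => ?_⟩
    refine ⟨fun hT => ?_, ?_⟩
    · lift T to Finset α using P.finite_toSet.subset (h𝓕 T hT)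
      exact ⟨T, by simpa [hT] using h𝓕 T hT, rfl⟩
    · rintro ⟨t, ht, rfl⟩
      exact (Finset.mem_filter.mp ht).2
  have hcard : ∀ A, 𝒜.Shatters A → A.card ≤ d := fun A hA => by
    by_contra! hd
    obtain ⟨B, hBA, hB⟩ := Finset.exists_subset_card_eq (Nat.succ_le_of_lt hd)
    exact h B hB (shatters_coe_iff.mpr (hA.mono_right hBA))
  have hsub : 𝒜.shatterer ⊆ (Finset.range (d + 1)).biUnion fun k => P.powersetCard k := by
    intro A hA
    rw [Finset.mem_shatterer] at hA
    obtain ⟨t, ht, hAt⟩ := hA.exists_superset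
    have htP : t ⊆ P := by exact_mod_cast h𝓕 t ⟨t, ht, rfl⟩
    simpa [hAt.trans htP, Nat.lt_succ_iff] using hcard A hA
  calc ((fun t : Finset α => (t : Set α)) '' (𝒜 : Set (Finset α))).ncard
    _ ≤ 𝒜.card := (Set.ncard_image_le 𝒜.finite_toSet).trans_eq (Set.ncard_coe_finset 𝒜)
    _ ≤ 𝒜.shatterer.card := 𝒜.card_le_card_shatterer
    _ ≤ ∑ k ∈ Finset.range (d + 1), (P.powersetCard k).card :=
      (Finset.card_le_card hsub).trans Finset.card_biUnion_le
    _ = ∑ k ∈ Finset.range (d + 1), P.card.choose k := by simp only [Finset.card_powersetCard]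
    _ ≤ (P.card + 1) ^ d := sum_range_choose_le_pow _ _
    _ = ((P : Set α).ncard + 1) ^ d := by rw [Set.ncard_coe_finset]

/-- The family of neighbourhoods `{p ∈ P | r p s}`, `s ∈ S`, of a relation `r` between points of
`P` and points of `S`. -/
def neighborhoods (P : Set α) (S : Set β) (r : α → β → Prop) : Set (Set α) :=
  (fun s => {p ∈ P | r p s}) '' S

variable {P : Set α} {S : Set β} {r : α → β → Prop}

lemma subset_of_mem_neighborhoods {T : Set α} (hT : T ∈ neighborhoods P S r) : T ⊆ P := by
  obtain ⟨s, -, rfl⟩ := hT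
  exact Set.sep_subset _ _

lemma finite_neighborhoods (hP : P.Finite) : (neighborhoods P S r).Finite :=
  hP.finite_subsets.subset fun _ => subset_of_mem_neighborhoods

lemma neighborhoods_congr {r' : α → β → Prop} (h : ∀ p ∈ P, ∀ s ∈ S, r p s ↔ r' p s) :
    neighborhoods P S r = neighborhoods P S r' :=
  Set.image_congr fun s hs => Set.ext fun p => and_congr_right fun hp => h p hp s hs

lemma ncard_neighborhoods_iSup_le {ι : Type*} [Fintype ι] (hP : P.Finite) (r : ι → α → β → Prop) :
    (neighborhoods P S (⨆ i, r i)).ncard ≤ ∏ i, (neighborhoods P S (r i)).ncard := by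
  have (i : ι) : Finite (neighborhoods P S (r i)) := finite_neighborhoods hP
  let union : (∀ i, neighborhoods P S (r i)) → Set α := fun T => ⋃ i, T i
  have hsub : neighborhoods P S (⨆ i, r i) ⊆ Set.range union := by
    rintro _ ⟨s, hs, rfl⟩
    refine ⟨fun i => ⟨_, s, hs, rfl⟩, Set.ext fun p => ?_⟩
    simp [union]
  calc (neighborhoods P S (⨆ i, r i)).ncard
    _ ≤ (Set.range union).ncard := Set.ncard_le_ncard hsub
    _ ≤ Nat.card (∀ i, neighborhoods P S (r i)) := Finite.card_range_le union
    _ = ∏ i, (neighborhoods P S (r i)).ncard := Nat.card_pi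

lemma exists_rel_iff_mem_of_shatters {A B : Set α} (hA : Shatters (neighborhoods P S r) A)
    (hB : B ⊆ A) : ∃ s, ∀ p ∈ A, r p s ↔ p ∈ B := by
  have hAP : A ⊆ P := by
    obtain ⟨T, hT, hTA⟩ := hA A subset_rfl
    exact (Set.inter_eq_right.mp hTA).trans (subset_of_mem_neighborhoods hT)
  obtain ⟨_, ⟨s, -, rfl⟩, rfl⟩ := hA B hB
  exact ⟨s, fun p hp => by simp [hp, hAP hp]⟩

end SetFamilies

section Crossings

variable {α β γ δ : Type*}

/-- The pairs `(a₁, b₁)` and `(a₂, b₂)` are `r`-related but neither of the two mixed pairs is: an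
induced matching of size two in the bipartite graph of `r`. -/
def Crossing (r : α → β → Prop) (a₁ : α) (b₁ : β) (a₂ : α) (b₂ : β) : Prop :=
  r a₁ b₁ ∧ r a₂ b₂ ∧ ¬ r a₁ b₂ ∧ ¬ r a₂ b₁

/-- A Ferrers relation: one without crossings, i.e. one whose neighbourhoods form a chain. -/
def IsFerrers (r : α → β → Prop) : Prop :=
  ∀ ⦃a₁ b₁ a₂ b₂⦄, ¬ Crossing r a₁ b₁ a₂ b₂

/-- A relation whose graph is a product set. -/
def IsRectangular (r : α → β → Prop) : Prop :=
  ∀ ⦃a₁ b₁ a₂ b₂⦄, r a₁ b₁ → r a₂ b₂ → r a₁ b₂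

/-- Some `r`-predecessor of `b₁` is not one of `b₂`. -/
def Separates (r : α → β → Prop) (b₁ b₂ : β) : Prop :=
  ∃ a, r a b₁ ∧ ¬ r a b₂

/-- `r` and `t` order their common type compatibly: if `b₂` has an `r`-predecessor that `b₁`
lacks, then every `t`-successor of `b₂` is one of `b₁`. The model case is `r = t = (<)`. -/
def Concordant (r : α → β → Prop) (t : β → γ → Prop) : Prop :=
  ∀ ⦃b₁ b₂⦄, Separates r b₂ b₁ → t b₂ ≤ t b₁

/-- The opposite of `Concordant`; the model case is `r = (<)`, `t = (>)`. -/
def Discordant (r : α → β → Prop) (t : β → γ → Prop) : Prop :=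
  ∀ ⦃b₁ b₂⦄, Separates r b₂ b₁ → t b₁ ≤ t b₂

lemma Crossing.symm {r : α → β → Prop} {a b a' b'} (h : Crossing r a b a' b') :
    Crossing r a' b' a b :=
  ⟨h.2.1, h.1, h.2.2.2, h.2.2.1⟩

lemma Crossing.exists_of_comp {r : α → β → Prop} {t : β → γ → Prop} {a c a' c'}
    (h : Crossing (Relation.Comp r t) a c a' c') :
    ∃ b b', Crossing r a b a' b' ∧ Crossing t b c b' c' := by
  obtain ⟨⟨b, hab, hbc⟩, ⟨b', hab', hbc'⟩, hac', hac⟩ := h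
  exact ⟨b, b', ⟨hab, hab', fun h => hac' ⟨b', h, hbc'⟩, fun h => hac ⟨b, h, hbc⟩⟩,
    hbc, hbc', fun h => hac' ⟨b, hab, h⟩, fun h => hac ⟨b', hab', h⟩⟩

lemma Crossing.of_inf_isRectangular {r t : α → β → Prop} (ht : IsRectangular t) {a b a' b'}
    (h : Crossing (r ⊓ t) a b a' b') : Crossing r a b a' b' :=
  ⟨h.1.1, h.2.1.1, fun hr => h.2.2.1 ⟨hr, ht h.1.2 h.2.1.2⟩,
    fun hr => h.2.2.2 ⟨hr, ht h.2.1.2 h.1.2⟩⟩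

lemma Crossing.separates_of_le {r t : α → β → Prop} {a b a' b'} (h : Crossing (r ⊓ t) a b a' b')
    (ht : t a ≤ t a') : Separates r b' b :=
  ⟨a', h.2.1.1, fun hr => h.2.2.2 ⟨hr, ht b h.1.2⟩⟩

lemma Concordant.separates_of_crossing {r : α → β → Prop} {t u : β → γ → Prop}
    (hrt : Concordant r t) {b c b' c'} (h : Crossing (t ⊓ u) b c b' c') (hb : Separates r b' b) :
    Separates u c c' :=
  ⟨b, h.1.2, fun hu => h.2.2.1 ⟨hrt hb c' h.2.1.1, hu⟩⟩

lemma Discordant.separates_of_crossing {r : α → β → Prop} {t u : β → γ → Prop}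
    (hrt : Discordant r t) {b c b' c'} (h : Crossing (t ⊓ u) b c b' c') (hb : Separates r b' b) :
    Separates u c' c :=
  ⟨b', h.2.1.2, fun hu => h.2.2.2 ⟨hrt hb c h.1.1, hu⟩⟩

lemma IsFerrers.inf_isRectangular {r t : α → β → Prop} (hr : IsFerrers r) (ht : IsRectangular t) :
    IsFerrers (r ⊓ t) :=
  fun _ _ _ _ h => hr (h.of_inf_isRectangular ht)

lemma IsFerrers.comp_left {r : α → β → Prop} (hr : IsFerrers r) (t : β → γ → Prop) :
    IsFerrers (Relation.Comp r t) := fun _ _ _ _ h =>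
  let ⟨_, _, h', _⟩ := h.exists_of_comp
  hr h'

lemma IsFerrers.comp_right {t : β → γ → Prop} (ht : IsFerrers t) (r : α → β → Prop) :
    IsFerrers (Relation.Comp r t) := fun _ _ _ _ h =>
  let ⟨_, _, _, h'⟩ := h.exists_of_comp
  ht h'

lemma IsFerrers.le_total {r : α → β → Prop} (hr : IsFerrers r) (a a' : α) :
    r a ≤ r a' ∨ r a' ≤ r a := by
  by_contra! h
  simp only [Pi.le_def, le_Prop_eq, not_forall] at h
  obtain ⟨⟨b, hab, hab'⟩, b', hb', hb⟩ := h
  exact hr ⟨hab, hb', hb, hab'⟩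

lemma IsFerrers.not_separates {r : α → β → Prop} (hr : IsFerrers r) {b b' : β}
    (h : Separates r b b') : ¬ Separates r b' b := by
  obtain ⟨a, hab, hab'⟩ := h
  rintro ⟨a', hb', hb⟩
  exact hr ⟨hab, hb', hab', hb⟩

lemma IsFerrers.ncard_neighborhoods_le {r : α → β → Prop} (hr : IsFerrers r) {P : Set α}
    (hP : P.Finite) (S : Set β) : (neighborhoods P S r).ncard ≤ P.ncard + 1 := by
  classical
  rw [← pow_one (P.ncard + 1)]
  refine ncard_le_pow_of_not_shatters hP (fun _ => subset_of_mem_neighborhoods) 1 fun A hA hsh => ?_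
  obtain ⟨a, b, hab, rfl⟩ := Finset.card_eq_two.mp hA
  obtain ⟨s, hs⟩ := exists_rel_iff_mem_of_shatters (B := {a}) hsh (by simp)
  obtain ⟨t, ht⟩ := exists_rel_iff_mem_of_shatters (B := {b}) hsh (by simp)
  exact hr (a₁ := a) (b₁ := s) (a₂ := b) (b₂ := t)
    ⟨by simp [hs], by simp [ht], by simp [ht, hab], by simp [hs, hab.symm]⟩

lemma exists_le_le_of_two_lt_card {f : α → β} [Preorder β] (hf : ∀ x y, f x ≤ f y ∨ f y ≤ f x)
    {A : Finset α} (hA : 2 < A.card) :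
    ∃ a ∈ A, ∃ b ∈ A, ∃ c ∈ A, a ≠ b ∧ b ≠ c ∧ f a ≤ f b ∧ f b ≤ f c := by
  obtain ⟨a, b, c, ha, hb, hc, hab, hac, hbc⟩ := Finset.two_lt_card_iff.mp hA
  rcases hf a b with h | h <;> rcases hf b c with h' | h' <;> rcases hf a c with h'' | h'' <;> grind

variable {r₁ r₂ : α → β → Prop} {t₁ t₂ m : β → γ → Prop} {u₁ u₂ : γ → δ → Prop}

-- Concordance reverses the direction of a separation along the path and discordance keeps it, so
-- the direction that arrives at `u₂` is the same for every crossing.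
lemma forall_separates_or_forall_separates_of_crossing (hm : IsRectangular m)
    (hrt : Concordant r₁ t₁ ∨ Discordant r₁ t₁) (htu : Concordant t₂ u₁ ∨ Discordant t₂ u₁) :
    let R := Relation.Comp (r₁ ⊓ r₂) (Relation.Comp (t₁ ⊓ t₂ ⊓ m) (u₁ ⊓ u₂))
    (∀ a d a' d', Crossing R a d a' d' → r₂ a ≤ r₂ a' → Separates u₂ d d') ∨
      (∀ a d a' d', Crossing R a d a' d' → r₂ a ≤ r₂ a' → Separates u₂ d' d) := by
  intro R
  have split {a d a' d'} (h : Crossing R a d a' d') (ha : r₂ a ≤ r₂ a') : ∃ b b' c c',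
      Separates r₁ b' b ∧ Crossing (t₁ ⊓ t₂) b c b' c' ∧ Crossing (u₁ ⊓ u₂) c d c' d' := by
    obtain ⟨b, b', hr, h'⟩ := h.exists_of_comp
    obtain ⟨c, c', ht, hu⟩ := h'.exists_of_comp
    exact ⟨b, b', c, c', hr.separates_of_le ha, ht.of_inf_isRectangular hm, hu⟩
  rcases hrt with hrt | hrt <;> rcases htu with htu | htu
  · exact .inr fun a d a' d' h ha =>
      let ⟨_, _, _, _, hr, ht, hu⟩ := split h ha
      htu.separates_of_crossing hu.symm (hrt.separates_of_crossing ht hr)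
  · exact .inl fun a d a' d' h ha =>
      let ⟨_, _, _, _, hr, ht, hu⟩ := split h ha
      htu.separates_of_crossing hu.symm (hrt.separates_of_crossing ht hr)
  · exact .inl fun a d a' d' h ha =>
      let ⟨_, _, _, _, hr, ht, hu⟩ := split h ha
      htu.separates_of_crossing hu (hrt.separates_of_crossing ht hr)
  · exact .inr fun a d a' d' h ha =>
      let ⟨_, _, _, _, hr, ht, hu⟩ := split h ha
      htu.separates_of_crossing hu (hrt.separates_of_crossing ht hr)

lemma not_shatters_neighborhoods_comp_comp (hr₁ : IsFerrers r₁) (hr₂ : IsFerrers r₂)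
    (hm : IsRectangular m) (hu₂ : IsFerrers u₂) (hrt : Concordant r₁ t₁ ∨ Discordant r₁ t₁)
    (htu : Concordant t₂ u₁ ∨ Discordant t₂ u₁) (P : Set α) (S : Set δ) {A : Finset α}
    (hA : 2 < A.card) :
    ¬ Shatters (neighborhoods P S
      (Relation.Comp (r₁ ⊓ r₂) (Relation.Comp (t₁ ⊓ t₂ ⊓ m) (u₁ ⊓ u₂)))) A := by
  intro hsh
  obtain ⟨a, ha, b, hb, c, hc, hab, hbc, hr_ab, hr_bc⟩ :=
    exists_le_le_of_two_lt_card hr₁.le_total hA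
  set R := Relation.Comp (r₁ ⊓ r₂) (Relation.Comp (t₁ ⊓ t₂ ⊓ m) (u₁ ⊓ u₂))
  have mono {x y d} (h₁ : r₁ x ≤ r₁ y) (h₂ : r₂ x ≤ r₂ y) : R x d → R y d :=
    fun ⟨q, hq, h⟩ => ⟨q, ⟨h₁ q hq.1, h₂ q hq.2⟩, h⟩
  obtain ⟨s, hs⟩ := exists_rel_iff_mem_of_shatters (B := {b}) hsh (by simpa using hb)
  obtain ⟨t, ht⟩ := exists_rel_iff_mem_of_shatters (B := {a, c}) hsh
    (by simp [Set.insert_subset_iff, ha, hc])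
  have hba : Crossing R b s a t :=
    ⟨by simp [hs b hb], by simp [ht a ha], by simp [ht b hb, hab.symm, hbc], by simp [hs a ha, hab]⟩
  have hcb : Crossing R c t b s :=
    ⟨by simp [ht c hc], by simp [hs b hb], by simp [hs c hc, hbc.symm],
      by simp [ht b hb, hab.symm, hbc]⟩
  have hr_ba : r₂ b ≤ r₂ a :=
    (hr₂.le_total b a).resolve_right fun h => hba.2.2.1 (mono hr_ab h hba.2.1)
  have hr_cb : r₂ c ≤ r₂ b :=
    (hr₂.le_total c b).resolve_right fun h => hcb.2.2.1 (mono hr_bc h hcb.2.1)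
  rcases forall_separates_or_forall_separates_of_crossing hm hrt htu with h | h
  · exact hu₂.not_separates (h _ _ _ _ hba hr_ba) (h _ _ _ _ hcb hr_cb)
  · exact hu₂.not_separates (h _ _ _ _ hba hr_ba) (h _ _ _ _ hcb hr_cb)

end Crossings

section Dominance

variable {ι : Type*} {N : ι → Set ℝ}

/-- The relation between points that compares their `i`-th coordinates by `R`. -/
def CoordRel.onCoord (R : CoordRel) (i : ι) (x y : ι → ℝ) : Prop :=
  R.holds (x i) (y i)

/-- The relation `R.onCoord i`, restricted to pairs whose `i`-th coordinates leave the set `M`. -/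
def CoordRel.leaving (R : CoordRel) (M : Set ℝ) (i : ι) (x y : ι → ℝ) : Prop :=
  R.onCoord i x y ∧ x i ∈ M ∧ y i ∉ M

/-- The dominance relation with coordinate relations `R`, restricted to pairs whose `i`-th
coordinates leave `N i` for every `i ∈ T`. -/
def dominatesLeaving (N : ι → Set ℝ) (R : ι → CoordRel) (T : Set ι) (x y : ι → ℝ) : Prop :=
  ∀ i, (R i).onCoord i x y ∧ (i ∈ T → x i ∈ N i ∧ y i ∉ N i)

lemma CoordRel.isFerrers_onCoord (R : CoordRel) (i : ι) : IsFerrers (R.onCoord i) := by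
  rintro a b a' b' ⟨hab, hab', hb', hb⟩
  cases R <;> simp only [CoordRel.onCoord, CoordRel.holds, not_lt, not_true] at * <;> linarith

lemma CoordRel.concordant_or_discordant_onCoord (R R' : CoordRel) (i : ι) :
    Concordant (R.onCoord i) (R'.onCoord i) ∨ Discordant (R.onCoord i) (R'.onCoord i) := by
  by_cases h : R = R'
  · left
    rintro b b' ⟨a, hab', hab⟩ c hc
    subst h
    cases R <;> simp only [CoordRel.onCoord, CoordRel.holds, not_lt, not_true] at * <;> linarith
  · right
    rintro b b' ⟨a, hab', hab⟩ c hc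
    cases R <;> cases R' <;>
      simp_all only [CoordRel.onCoord, CoordRel.holds, not_lt, not_true, reduceCtorEq,
        not_false_eq_true] <;> linarith

lemma CoordRel.holds_of_mem_of_notMem {M : Set ℝ} (hM : IsLowerSet M ∨ IsUpperSet M)
    {R : CoordRel} {a b a' b' : ℝ} (ha : a ∈ M) (hb : b ∉ M) (hR : R.holds a b)
    (ha' : a' ∈ M) (hb' : b' ∉ M) : R.holds a' b' := by
  rcases hM with hM | hM
  · have lt {x y} (hx : x ∈ M) (hy : y ∉ M) : x < y := not_le.mp fun h => hy (hM h hx)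
    cases R
    · exact lt ha' hb'
    · exact (lt_asymm hR (lt ha hb)).elim
    · trivial
  · have gt {x y} (hx : x ∈ M) (hy : y ∉ M) : y < x := not_le.mp fun h => hy (hM h hx)
    cases R
    · exact (lt_asymm hR (gt ha hb)).elim
    · exact gt ha' hb'
    · trivial

lemma CoordRel.isRectangular_leaving {M : Set ℝ} (hM : IsLowerSet M ∨ IsUpperSet M)
    (R : CoordRel) (i : ι) : IsRectangular (R.leaving M i) :=
  fun _ _ _ _ ⟨hR, ha, hb⟩ ⟨_, _, hb'⟩ => ⟨holds_of_mem_of_notMem hM ha hb hR ha hb', ha, hb'⟩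

lemma isFerrers_dominatesLeaving_compl_singleton (hN : ∀ i, IsLowerSet (N i) ∨ IsUpperSet (N i))
    (R : ι → CoordRel) (i : ι) : IsFerrers (dominatesLeaving N R {i}ᶜ) := by
  have hrect : IsRectangular fun x y => ∀ j ≠ i, (R j).leaving (N j) j x y :=
    fun _ _ _ _ h h' j hj => (R j).isRectangular_leaving (hN j) j (h j hj) (h' j hj)
  convert ((R i).isFerrers_onCoord i).inf_isRectangular hrect using 1
  ext x y
  simp only [dominatesLeaving, CoordRel.leaving, Pi.inf_apply, inf_Prop_eq, Set.mem_compl_iff,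
    Set.mem_singleton_iff]
  grind

lemma dominatesLeaving_singleton {i j k : ι} (h : ∀ l, l = i ∨ l = j ∨ l = k)
    (R : ι → CoordRel) :
    dominatesLeaving N R {i} =
      (R j).onCoord j ⊓ ((R k).onCoord k ⊓ (R i).leaving (N i) i) := by
  ext x y
  constructor
  · exact fun hd => ⟨(hd j).1, (hd k).1, (hd i).1, (hd i).2 rfl⟩
  · rintro ⟨hj, hk, hi, hleave⟩ l
    refine ⟨?_, ?_⟩
    · rcases h l with rfl | rfl | rfl <;> assumption
    · rintro rfl
      exact hleave

end Dominance

section ThreeSteps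

variable {N : Fin 3 → Set ℝ} {R : Fin 3 → Fin 3 → CoordRel}

/-- `p` and `s` are joined by a path `p, q, r, s` with `q ∈ Q₁` and `r ∈ Q₂` whose step number `t`
respects the dominance relation with coordinate relations `R t` and leaves `N i` in each
coordinate `i ∈ T t`. -/
def threeStep (Q₁ Q₂ : Set (Fin 3 → ℝ)) (N : Fin 3 → Set ℝ) (R : Fin 3 → Fin 3 → CoordRel)
    (T : Fin 3 → Set (Fin 3)) : (Fin 3 → ℝ) → (Fin 3 → ℝ) → Prop :=
  Relation.Comp (dominatesLeaving N (R 0) (T 0))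
    (Relation.Comp (dominatesLeaving N (R 1) (T 1) ⊓ fun q r => q ∈ Q₁ ∧ r ∈ Q₂)
      (dominatesLeaving N (R 2) (T 2)))

lemma isFerrers_threeStep (hN : ∀ i, IsLowerSet (N i) ∨ IsUpperSet (N i))
    (Q₁ Q₂ : Set (Fin 3 → ℝ)) (R : Fin 3 → Fin 3 → CoordRel) {T : Fin 3 → Set (Fin 3)}
    {t i : Fin 3} (hT : T t = {i}ᶜ) : IsFerrers (threeStep Q₁ Q₂ N R T) := by
  have hstep : IsFerrers (dominatesLeaving N (R t) (T t)) :=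
    hT ▸ isFerrers_dominatesLeaving_compl_singleton hN (R t) i
  fin_cases t
  · exact hstep.comp_left _
  · exact ((hstep.inf_isRectangular fun _ _ _ _ h h' => ⟨h.1, h'.2⟩).comp_left _).comp_right _
  · exact (hstep.comp_right _).comp_right _

lemma not_shatters_neighborhoods_threeStep (hN : ∀ i, IsLowerSet (N i) ∨ IsUpperSet (N i))
    (P Q₁ Q₂ S : Set (Fin 3 → ℝ)) (σ : Equiv.Perm (Fin 3)) {A : Finset (Fin 3 → ℝ)}
    (hA : 2 < A.card) :
    ¬ Shatters (neighborhoods P S (threeStep Q₁ Q₂ N R fun t => {σ t})) A := by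
  have hσ {t t' t'' : Fin 3} (h : ∀ l, l = t ∨ l = t' ∨ l = t'') (l : Fin 3) :
      l = σ t ∨ l = σ t' ∨ l = σ t'' := by
    simpa only [Equiv.symm_apply_eq] using h (σ.symm l)
  have rect (t i : Fin 3) := (R t i).isRectangular_leaving (hN i) i
  have ferrers (t i : Fin 3) := (R t i).isFerrers_onCoord i
  have step₀ := dominatesLeaving_singleton (N := N) (R := R 0)
    (hσ (show ∀ l : Fin 3, l = 0 ∨ l = 2 ∨ l = 1 by decide))
  have step₁ := dominatesLeaving_singleton (N := N) (R := R 1)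
    (hσ (show ∀ l : Fin 3, l = 1 ∨ l = 2 ∨ l = 0 by decide))
  have step₂ := dominatesLeaving_singleton (N := N) (R := R 2)
    (hσ (show ∀ l : Fin 3, l = 2 ∨ l = 0 ∨ l = 1 by decide))
  have hmid : IsRectangular ((R 1 (σ 1)).leaving (N (σ 1)) (σ 1) ⊓ fun q r => q ∈ Q₁ ∧ r ∈ Q₂) :=
    fun _ _ _ _ h h' => ⟨rect _ _ h.1 h'.1, h.2.1, h'.2.2⟩
  rw [threeStep, step₀, step₁, step₂, ← inf_assoc ((R 1 (σ 2)).onCoord (σ 2)), inf_assoc (_ ⊓ _)]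
  exact not_shatters_neighborhoods_comp_comp (ferrers _ _)
    ((ferrers _ _).inf_isRectangular (rect _ _)) hmid ((ferrers _ _).inf_isRectangular (rect _ _))
    (CoordRel.concordant_or_discordant_onCoord _ _ _)
    (CoordRel.concordant_or_discordant_onCoord _ _ _) P S hA

/-- The patterns according to which three coordinates are left along a path of three steps: either
a step `t` leaves all coordinates except possibly `i`, or step `t` leaves coordinate `σ t`. -/
def leavingPattern : (Fin 3 × Fin 3) ⊕ Equiv.Perm (Fin 3) → Fin 3 → Set (Fin 3)
  | .inl (t, i) => Function.update (fun _ => ∅) t {i}ᶜ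
  | .inr σ => fun t => {σ t}

lemma exists_leavingPattern (f : Fin 3 → Fin 3) :
    ∃ c, ∀ t, ∀ i ∈ leavingPattern c t, f i = t := by
  by_cases hf : f.Injective
  · refine ⟨.inr (Equiv.ofBijective f (Finite.injective_iff_bijective.mp hf)).symm, ?_⟩
    rintro t _ rfl
    exact Equiv.ofBijective_apply_symm_apply f _ t
  · obtain ⟨a, b, hfab, hab⟩ := Function.not_injective_iff.mp hf
    obtain ⟨i, hi⟩ : ∃ i, ∀ j ≠ i, j = a ∨ j = b := by
      clear hfab
      revert a b
      decide
    refine ⟨.inl (f a, i), fun t j hj => ?_⟩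
    by_cases ht : t = f a
    · subst ht
      rcases hi j (by simpa [leavingPattern] using hj) with rfl | rfl
      exacts [rfl, hfab.symm]
    · simp [leavingPattern, ht] at hj

lemma ncard_neighborhoods_threeStep_inl_le {P : Set (Fin 3 → ℝ)} (hP : P.Finite)
    (hN : ∀ i, IsLowerSet (N i) ∨ IsUpperSet (N i)) (Q₁ Q₂ S : Set (Fin 3 → ℝ))
    (c : Fin 3 × Fin 3) :
    (neighborhoods P S (threeStep Q₁ Q₂ N R (leavingPattern (.inl c)))).ncard ≤ P.ncard + 1 :=
  (isFerrers_threeStep hN Q₁ Q₂ R (Function.update_self c.1 _ _)).ncard_neighborhoods_le hP S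

lemma ncard_neighborhoods_threeStep_inr_le {P : Set (Fin 3 → ℝ)} (hP : P.Finite)
    (hN : ∀ i, IsLowerSet (N i) ∨ IsUpperSet (N i)) (Q₁ Q₂ S : Set (Fin 3 → ℝ))
    (σ : Equiv.Perm (Fin 3)) :
    (neighborhoods P S (threeStep Q₁ Q₂ N R (leavingPattern (.inr σ)))).ncard ≤ (P.ncard + 1) ^ 2 :=
  ncard_le_pow_of_not_shatters hP (fun _ => subset_of_mem_neighborhoods) 2 fun _ hA =>
    not_shatters_neighborhoods_threeStep hN P Q₁ Q₂ S σ (by omega)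

lemma threeStep_empty_iff_exists_leavingPattern {Q₁ Q₂ : Set (Fin 3 → ℝ)} {p s : Fin 3 → ℝ}
    (hp : ∀ i, p i ∈ N i) (hs : ∀ i, s i ∉ N i) :
    threeStep Q₁ Q₂ N R (fun _ => ∅) p s ↔ ∃ c, threeStep Q₁ Q₂ N R (leavingPattern c) p s := by
  constructor
  · rintro ⟨q, hpq, r, ⟨hqr, hmem⟩, hrs⟩
    have hleave (i : Fin 3) : ∃ t : Fin 3, ![p, q, r] t i ∈ N i ∧ ![q, r, s] t i ∉ N i := by
      by_cases hq : q i ∈ N i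
      · by_cases hr : r i ∈ N i
        · exact ⟨2, hr, hs i⟩
        · exact ⟨1, hq, hr⟩
      · exact ⟨0, hp i, hq⟩
    choose f hf using hleave
    obtain ⟨c, hc⟩ := exists_leavingPattern f
    have hT {t i} (hi : i ∈ leavingPattern c t) := hc t i hi ▸ hf i
    exact ⟨c, q, fun i => ⟨(hpq i).1, hT⟩, r, ⟨fun i => ⟨(hqr i).1, hT⟩, hmem⟩,
      fun i => ⟨(hrs i).1, hT⟩⟩
  · rintro ⟨c, q, hpq, r, ⟨hqr, hmem⟩, hrs⟩
    exact ⟨q, fun i => ⟨(hpq i).1, False.elim⟩, r, ⟨fun i => ⟨(hqr i).1, False.elim⟩, hmem⟩,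
      fun i => ⟨(hrs i).1, False.elim⟩⟩

lemma ncard_neighborhoods_threeStep_le {P S : Set (Fin 3 → ℝ)} (hP : P.Finite)
    (hN : ∀ i, IsLowerSet (N i) ∨ IsUpperSet (N i)) (hPN : ∀ i, ∀ p ∈ P, p i ∈ N i)
    (hSN : ∀ i, ∀ s ∈ S, s i ∉ N i) (Q₁ Q₂ : Set (Fin 3 → ℝ)) :
    (neighborhoods P S (threeStep Q₁ Q₂ N R fun _ => ∅)).ncard ≤ (P.ncard + 1) ^ 21 := by
  have hcongr : neighborhoods P S (threeStep Q₁ Q₂ N R fun _ => ∅) =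
      neighborhoods P S (⨆ c, threeStep Q₁ Q₂ N R (leavingPattern c)) :=
    neighborhoods_congr fun p hp s hs => by
      simpa using threeStep_empty_iff_exists_leavingPattern (hPN · p hp) (hSN · s hs)
  calc (neighborhoods P S (threeStep Q₁ Q₂ N R fun _ => ∅)).ncard
    _ ≤ ∏ c, (neighborhoods P S (threeStep Q₁ Q₂ N R (leavingPattern c))).ncard :=
      hcongr ▸ ncard_neighborhoods_iSup_le hP _
    _ ≤ (∏ _c : Fin 3 × Fin 3, (P.ncard + 1)) * ∏ _σ : Equiv.Perm (Fin 3), (P.ncard + 1) ^ 2 := by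
      rw [Fintype.prod_sum_type]
      gcongr
      · exact ncard_neighborhoods_threeStep_inl_le hP hN Q₁ Q₂ S _
      · exact ncard_neighborhoods_threeStep_inr_le hP hN Q₁ Q₂ S _
    _ = (P.ncard + 1) ^ 21 := by
      simp only [Finset.prod_const, Finset.card_univ, Fintype.card_prod, Fintype.card_fin,
        Fintype.card_perm, ← pow_mul, ← pow_add]
      rfl

lemma SepAt.exists_isLowerSet_or_isUpperSet {P S : Set (Fin 3 → ℝ)} {i : Fin 3}
    (h : SepAt i P S) : ∃ M : Set ℝ, (IsLowerSet M ∨ IsUpperSet M) ∧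
      (∀ p ∈ P, p i ∈ M) ∧ ∀ s ∈ S, s i ∉ M := by
  obtain ⟨μ, ⟨hP, hS⟩ | ⟨hS, hP⟩⟩ := h
  · exact ⟨Set.Iio μ, .inl (isLowerSet_Iio μ), hP, fun s hs => (hS s hs).not_gt⟩
  · exact ⟨Set.Ioi μ, .inr (isUpperSet_Ioi μ), hP, fun s hs => (hS s hs).not_gt⟩

end ThreeSteps

theorem stmt15_general {P : Set (Fin 3 → ℝ)} (hP : P.Finite) (Q R S : Set (Fin 3 → ℝ))
    {d₁ d₂ d₃ : (Fin 3 → ℝ) → (Fin 3 → ℝ) → Prop}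
    (h₁ : IsGenDom d₁) (h₂ : IsGenDom d₂) (h₃ : IsGenDom d₃) (hsep : ∀ i, SepAt i P S) :
    ((fun s => N3 P Q R d₁ d₂ d₃ s) '' S).ncard ≤ (P.ncard + 1) ^ 21 := by
  obtain ⟨R₁, h₁⟩ := h₁
  obtain ⟨R₂, h₂⟩ := h₂
  obtain ⟨R₃, h₃⟩ := h₃
  choose N hN hPN hSN using fun i => (hsep i).exists_isLowerSet_or_isUpperSet
  convert ncard_neighborhoods_threeStep_le (R := ![R₁, R₂, R₃]) hP hN hPN hSN Q R using 2
  refine Set.image_congr fun s _ => Set.ext fun p => and_congr_right fun _ => ?_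
  constructor
  · rintro ⟨q, hq, r, hr, hpq, hqr, hrs⟩
    exact ⟨q, fun i => ⟨(h₁ p q).mp hpq i, False.elim⟩,
      r, ⟨fun i => ⟨(h₂ q r).mp hqr i, False.elim⟩, hq, hr⟩,
      fun i => ⟨(h₃ r s).mp hrs i, False.elim⟩⟩
  · rintro ⟨q, hpq, r, ⟨hqr, hq, hr⟩, hrs⟩
    exact ⟨q, hq, r, hr, (h₁ p q).mpr fun i => (hpq i).1, (h₂ q r).mpr fun i => (hqr i).1,
      (h₃ r s).mpr fun i => (hrs i).1⟩

theorem stmt15 (P Q R S : Set (Fin 3 → ℝ))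
    (hP : P.Finite) (hQ : Q.Finite) (hR : R.Finite) (hS : S.Finite)
    (hdistinct : ∀ x ∈ P ∪ Q ∪ R ∪ S, ∀ y ∈ P ∪ Q ∪ R ∪ S, x ≠ y → ∀ i, x i ≠ y i)
    (d₁ d₂ d₃ : (Fin 3 → ℝ) → (Fin 3 → ℝ) → Prop)
    (h₁ : IsGenDom d₁) (h₂ : IsGenDom d₂) (h₃ : IsGenDom d₃)
    (hx : SepAt 0 P S) (hy : SepAt 1 P S) (hz : SepAt 2 P S) :
    ((fun s => N3 P Q R d₁ d₂ d₃ s) '' S).ncard ≤ (P.ncard + 1) ^ 21 :=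
  stmt15_general hP Q R S h₁ h₂ h₃ (by simp [Fin.forall_fin_succ, hx, hy, hz])
end
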